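/- Theorem 1(i), o(1/√k) rate of the PD3O algorithm: Suppose the stepsizes are constant, γ_k ≡ γ ∈ (0, 2/L_F), and η ≥ ‖K‖². Then the objective values along the PD3O iterates satisfy Ψ(x^k) − Ψ(x*) = o(1/√k); that is, √k · (Ψ(x^k) − Ψ(x*)) → 0 as k → ∞. -/

import Mathlib

/-!
In the variables `(s, u) = (q - K* u, u)` and for the squared seminorm `‖s‖² + ⟪(η - K K*) u, u⟫`,
the PD3O iteration is an averaged operator: monotonicity of `∂R` and `∂H` and cocoercivity of `∇F`
make the squared distance of two states decrease by at least `1 - γ L_F / 2` times the squared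
distance of their displacements. Comparing an iterate with its successor shows that the squared
residual decreases along the iteration; comparing it with the fixed point given by a primal-dual
solution shows that the squared residual is summable. It is therefore `o(1/k)`. Since `H` is
Lipschitz on bounded sets, the objective gap is at most a constant times the residual, hence
`o(1/√k)`.
-/

open Filter Topology RealInnerProductSpace

noncomputable section

/-- `p` is a minimizer of `y ↦ σ·G(y) + (1/2)‖y − z‖²`, i.e. `p = prox_{σG}(z)`
(the minimizer is unique when `G` is convex). -/
def IsProxPt {E : Type*} [NormedAddCommGroup E] [InnerProductSpace ℝ E]
    (σ : ℝ) (G : E → ℝ) (z p : E) : Prop :=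
  ∀ y, σ * G p + ‖p - z‖ ^ 2 / 2 ≤ σ * G y + ‖y - z‖ ^ 2 / 2

/-- `u ∈ ∂G(z)`. -/
def IsSubgradientAt {E : Type*} [NormedAddCommGroup E] [InnerProductSpace ℝ E]
    (G : E → ℝ) (z u : E) : Prop :=
  ∀ y, G z + ⟪u, y - z⟫ ≤ G y

section Subgradients

theorem le_add_of_isMinOn_add {E : Type*} [AddCommGroup E] [Module ℝ E] {G φ : E → ℝ} {p y : E}
    {m : ℝ} (hG : ConvexOn ℝ Set.univ G) (hmin : IsMinOn (G + φ) Set.univ p)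
    (hφ : HasLineDerivAt ℝ φ m p (y - p)) : G p ≤ G y + m := by
  have hsecant : ∀ t ∈ Set.Ioc (0 : ℝ) 1, G p - G y ≤ t⁻¹ • (φ (p + t • (y - p)) - φ p) := by
    rintro t ⟨ht, ht1⟩
    have hconv := hG.2 (Set.mem_univ p) (Set.mem_univ y) (sub_nonneg.2 ht1) ht.le (by ring)
    rw [show (1 - t) • p + t • y = p + t • (y - p) by module] at hconv
    have hle := isMinOn_univ_iff.1 hmin (p + t • (y - p))
    simp only [Pi.add_apply, smul_eq_mul] at hconv hle ⊢
    rw [inv_mul_eq_div, le_div_iff₀ ht]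
    linarith
  have := ge_of_tendsto hφ.tendsto_slope_zero_right
    (Filter.mem_of_superset (Ioc_mem_nhdsGT one_pos) hsecant)
  linarith

variable {E : Type*} [NormedAddCommGroup E] [InnerProductSpace ℝ E]

theorem IsProxPt.isSubgradientAt {σ : ℝ} {G : E → ℝ} {v p : E} (hσ : 0 < σ)
    (hG : ConvexOn ℝ Set.univ G) (h : IsProxPt σ G (σ • v) p) :
    IsSubgradientAt G p (v - σ⁻¹ • p) := by
  intro y
  have hφ : HasFDerivAt (fun y => ‖y - σ • v‖ ^ 2 / 2) (innerSL ℝ (p - σ • v)) p := by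
    convert! ((hasFDerivAt_id p).sub_const (σ • v)).norm_sq.mul_const (2⁻¹ : ℝ) using 1
    ext w
    simp
  have hmin : IsMinOn ((fun y => σ • G y) + fun y => ‖y - σ • v‖ ^ 2 / 2) Set.univ p :=
    isMinOn_univ_iff.2 h
  have hopt := le_add_of_isMinOn_add (hG.smul hσ.le) hmin
    (hφ.hasLineDerivAt (y - p))
  have hscale : p - σ • v = -σ • (v - σ⁻¹ • p) := by
    rw [smul_sub, smul_smul, neg_mul, mul_inv_cancel₀ hσ.ne']
    module
  rw [innerSL_apply_apply, hscale, real_inner_smul_left] at hopt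
  simp only [smul_eq_mul] at hopt
  refine le_of_mul_le_mul_left ?_ hσ
  linarith

theorem IsSubgradientAt.inner_sub_nonneg {G : E → ℝ} {x y u v : E} (hx : IsSubgradientAt G x u)
    (hy : IsSubgradientAt G y v) : 0 ≤ ⟪u - v, x - y⟫ := by
  have hxy := hx y
  have hyx := hy x
  rw [← neg_sub x y, inner_neg_right] at hxy
  rw [inner_sub_left]
  linarith

theorem IsSubgradientAt.norm_le_of_lipschitzOnWith {G : E → ℝ} {z u : E} {C : NNReal} {s : Set E}
    (h : IsSubgradientAt G z u) (hs : s ∈ 𝓝 z) (hG : LipschitzOnWith C G s) : ‖u‖ ≤ C := by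
  have hline : Tendsto (fun t : ℝ => z + t • u) (𝓝[>] 0) (𝓝 z) := by
    refine (Continuous.tendsto' ?_ 0 z (by simp)).mono_left nhdsWithin_le_nhds
    fun_prop
  obtain ⟨t, hts, ht⟩ := ((hline.eventually hs).and self_mem_nhdsWithin).exists
  have ht : 0 < t := ht
  have hsub := h (z + t • u)
  have hlip := (le_abs_self _).trans (hG.dist_le_mul _ hts _ (mem_of_mem_nhds hs))
  rw [add_sub_cancel_left, real_inner_smul_right, real_inner_self_eq_norm_sq] at hsub
  rw [dist_eq_norm, add_sub_cancel_left, norm_smul, Real.norm_of_nonneg ht.le] at hlip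
  have hsq : (t * ‖u‖) * ‖u‖ ≤ (t * ‖u‖) * C := by linarith
  rcases (norm_nonneg u).eq_or_lt with hu | hu
  · exact hu ▸ C.2
  · exact le_of_mul_le_mul_left hsq (by positivity)

end Subgradients

/-- Cocoercivity of a vector field `A` with constant `1 / L`, written without the division. -/
def IsCocoercive {E : Type*} [NormedAddCommGroup E] [InnerProductSpace ℝ E]
    (L : ℝ) (A : E → E) : Prop :=
  ∀ x y, ‖A x - A y‖ ^ 2 ≤ L * ⟪A x - A y, x - y⟫

section SmoothConvex

variable {E : Type*} [NormedAddCommGroup E] [InnerProductSpace ℝ E] [CompleteSpace E]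
  {F : E → ℝ} {F' : E → E} {L : ℝ}

theorem IsSubgradientAt.of_hasGradientAt {g z : E} (hF : ConvexOn ℝ Set.univ F)
    (hg : HasGradientAt F g z) : IsSubgradientAt F z g := by
  intro y
  have hmin : IsMinOn (F + -F) Set.univ z := isMinOn_univ_iff.2 fun y => by simp
  have := le_add_of_isMinOn_add hF hmin (hg.hasFDerivAt.neg.hasLineDerivAt (y - z))
  rw [neg_apply, InnerProductSpace.toDual_apply_apply] at this
  linarith

theorem le_add_inner_add_norm_sq_of_lipschitz_gradient (hg : ∀ z, HasGradientAt F (F' z) z)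
    (hL : ∀ z w, ‖F' z - F' w‖ ≤ L * ‖z - w‖) (z y : E) :
    F y ≤ F z + ⟪F' z, y - z⟫ + L / 2 * ‖y - z‖ ^ 2 := by
  set d := y - z
  have hderiv (t : ℝ) : HasDerivAt
      (fun t : ℝ => F (z + t • d) - t * ⟪F' z, d⟫ - t ^ 2 * (L / 2 * ‖d‖ ^ 2))
      (⟪F' (z + t • d), d⟫ - ⟪F' z, d⟫ - 2 * t * (L / 2 * ‖d‖ ^ 2)) t := by
    have hline : HasDerivAt (fun t : ℝ => z + t • d) d t := by
      simpa using ((hasDerivAt_id t).smul_const d).const_add z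
    have hF : HasDerivAt (fun t : ℝ => F (z + t • d)) ⟪F' (z + t • d), d⟫ t :=
      ((hg (z + t • d)).hasFDerivAt.comp_hasDerivAt t hline :)
    exact ((hF.sub ((hasDerivAt_id t).mul_const ⟪F' z, d⟫)).sub
      ((hasDerivAt_pow 2 t).mul_const (L / 2 * ‖d‖ ^ 2))).congr_deriv (by simp)
  have hanti : AntitoneOn
      (fun t : ℝ => F (z + t • d) - t * ⟪F' z, d⟫ - t ^ 2 * (L / 2 * ‖d‖ ^ 2))
      (Set.Icc 0 1) := by
    refine antitoneOn_of_deriv_nonpos (convex_Icc 0 1)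
      (fun t _ => (hderiv t).continuousAt.continuousWithinAt)
      (fun t _ => (hderiv t).differentiableAt.differentiableWithinAt) fun t ht => ?_
    rw [interior_Icc] at ht
    have hgrowth : ⟪F' (z + t • d) - F' z, d⟫ ≤ L * (t * ‖d‖) * ‖d‖ := by
      have hlip := hL (z + t • d) z
      rw [add_sub_cancel_left, norm_smul, Real.norm_of_nonneg ht.1.le] at hlip
      exact (real_inner_le_norm _ _).trans (by gcongr)
    rw [inner_sub_left] at hgrowth
    rw [(hderiv t).deriv]
    linarith
  have := hanti (Set.left_mem_Icc.2 zero_le_one) (Set.right_mem_Icc.2 zero_le_one) zero_le_one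
  simp only [one_smul, zero_smul, add_zero, d, add_sub_cancel] at this
  linarith

theorem add_inner_add_norm_gradient_sub_sq_le (hL0 : 0 < L) (hF : ConvexOn ℝ Set.univ F)
    (hg : ∀ z, HasGradientAt F (F' z) z) (hL : ∀ z w, ‖F' z - F' w‖ ≤ L * ‖z - w‖) (x y : E) :
    F x + ⟪F' x, y - x⟫ + 1 / (2 * L) * ‖F' y - F' x‖ ^ 2 ≤ F y := by
  set δ := F' y - F' x with hδ
  set w := y - L⁻¹ • δ with hw
  -- `w` is the gradient step from `y` for `F - ⟪F' x, ·⟫`, a convex function minimized at `x`.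
  have hlower := IsSubgradientAt.of_hasGradientAt hF (hg x) w
  have hupper := le_add_inner_add_norm_sq_of_lipschitz_gradient hg hL y w
  have hwy : w - y = -(L⁻¹ • δ) := by rw [hw]; abel
  have hwx : w - x = (y - x) + (w - y) := by abel
  have hstep : ⟪F' y, w - y⟫ - ⟪F' x, w - y⟫ = -(L⁻¹ * ‖δ‖ ^ 2) := by
    rw [← inner_sub_left, ← hδ, hwy, inner_neg_right, real_inner_smul_right,
      real_inner_self_eq_norm_sq]
  have hsq : L / 2 * ‖w - y‖ ^ 2 = L⁻¹ * ‖δ‖ ^ 2 / 2 := by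
    rw [hwy, norm_neg, norm_smul, mul_pow, Real.norm_eq_abs, sq_abs]
    field_simp
  have hhalf : 1 / (2 * L) * ‖δ‖ ^ 2 = L⁻¹ * ‖δ‖ ^ 2 / 2 := by field_simp
  rw [hwx, inner_add_right] at hlower
  linarith

theorem IsCocoercive.of_lipschitz_gradient (hL0 : 0 < L) (hF : ConvexOn ℝ Set.univ F)
    (hg : ∀ z, HasGradientAt F (F' z) z) (hL : ∀ z w, ‖F' z - F' w‖ ≤ L * ‖z - w‖) :
    IsCocoercive L F' := by
  intro x y
  have hxy := add_inner_add_norm_gradient_sub_sq_le hL0 hF hg hL x y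
  have hyx := add_inner_add_norm_gradient_sub_sq_le hL0 hF hg hL y x
  rw [norm_sub_rev, ← neg_sub x y, inner_neg_right] at hxy
  have hsum : ‖F' x - F' y‖ ^ 2 / L ≤ ⟪F' x - F' y, x - y⟫ := by
    rw [inner_sub_left]
    have : ‖F' x - F' y‖ ^ 2 / L = 2 * (1 / (2 * L) * ‖F' x - F' y‖ ^ 2) := by field_simp
    linarith
  rwa [div_le_iff₀' hL0] at hsum

end SmoothConvex

theorem tendsto_mul_of_antitone_of_summable {f : ℕ → ℝ} (hf : Antitone f) (hs : Summable f) :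
    Tendsto (fun n : ℕ => (n : ℝ) * f n) atTop (𝓝 0) := by
  have hf0 (n : ℕ) : 0 ≤ f n := hf.le_of_tendsto hs.tendsto_atTop_zero n
  have hblock (n : ℕ) : (n : ℝ) * f n
      ≤ 2 * (∑ i ∈ Finset.range n, f i - ∑ i ∈ Finset.range (n / 2), f i) := by
    have hcard : (n - n / 2) • f n ≤ ∑ i ∈ Finset.Ico (n / 2) n, f i := by
      rw [← Nat.card_Ico]
      exact Finset.card_nsmul_le_sum _ _ _ fun i hi => hf (Finset.mem_Ico.1 hi).2.le
    rw [Finset.sum_Ico_eq_sub _ (Nat.div_le_self n 2), nsmul_eq_mul] at hcard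
    have hhalf : (n : ℝ) ≤ 2 * (n - n / 2 : ℕ) := by
      exact_mod_cast (by lia : n ≤ 2 * (n - n / 2))
    linarith [mul_le_mul_of_nonneg_right hhalf (hf0 n)]
  have hsum := hs.hasSum.tendsto_sum_nat
  have hdiff := (hsum.sub (hsum.comp (Nat.tendsto_div_const_atTop two_ne_zero))).const_mul 2
  rw [sub_self, mul_zero] at hdiff
  exact squeeze_zero (fun n => mul_nonneg n.cast_nonneg (hf0 n)) hblock hdiff

theorem summable_of_add_mul_le {V D : ℕ → ℝ} {c : ℝ} (hc : 0 < c) (hV : ∀ n, 0 ≤ V n)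
    (hD : ∀ n, 0 ≤ D n) (h : ∀ n, V (n + 1) + c * D n ≤ V n) : Summable D := by
  refine summable_of_sum_range_le (c := V 0 / c) hD fun n => ?_
  have htelescope : V n + c * ∑ i ∈ Finset.range n, D i ≤ V 0 := by
    induction n with
    | zero => simp
    | succ n ih =>
      rw [Finset.sum_range_succ]
      linarith [h n]
  rw [le_div_iff₀' hc]
  linarith [hV n]

theorem exists_lipschitzOnWith_of_convexOn_of_isBounded {E : Type*} [NormedAddCommGroup E]
    [NormedSpace ℝ E] [FiniteDimensional ℝ E] {G : E → ℝ} {s : Set E}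
    (hG : ConvexOn ℝ Set.univ G) (hs : Bornology.IsBounded s) : ∃ C, LipschitzOnWith C G s := by
  have := FiniteDimensional.proper_real E
  obtain ⟨C, hC⟩ :=
    hG.locallyLipschitz.locallyLipschitzOn.exists_lipschitzOnWith_of_compact hs.isCompact_closure
  exact ⟨C, hC.mono subset_closure⟩

theorem norm_apply_sq_le_of_norm_sq_le {𝕜 E G : Type*} [NontriviallyNormedField 𝕜]
    [SeminormedAddCommGroup E] [NormedSpace 𝕜 E] [SeminormedAddCommGroup G] [NormedSpace 𝕜 G]
    {A : E →L[𝕜] G} {η : ℝ} (hη : ‖A‖ ^ 2 ≤ η) (x : E) : ‖A x‖ ^ 2 ≤ η * ‖x‖ ^ 2 :=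
  calc ‖A x‖ ^ 2 ≤ (‖A‖ * ‖x‖) ^ 2 := by gcongr; exact A.le_opNorm x
    _ ≤ η * ‖x‖ ^ 2 := by rw [mul_pow]; gcongr

theorem inner_le_norm_sq_div_add {E : Type*} [NormedAddCommGroup E] [InnerProductSpace ℝ E]
    {c : ℝ} (hc : 0 < c) (v w : E) : ⟪v, w⟫ ≤ ‖w‖ ^ 2 / c + c / 4 * ‖v‖ ^ 2 := by
  have hsq : ‖w‖ ^ 2 / c + c / 4 * ‖v‖ ^ 2 - ‖v‖ * ‖w‖ = (‖w‖ - c / 2 * ‖v‖) ^ 2 / c := by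
    field_simp
    ring
  have : 0 ≤ (‖w‖ - c / 2 * ‖v‖) ^ 2 / c := by positivity
  linarith [real_inner_le_norm v w]

section PrimalDualMetric

open scoped InnerProduct

variable {𝒳 𝒰 : Type*}
  [NormedAddCommGroup 𝒳] [InnerProductSpace ℝ 𝒳] [CompleteSpace 𝒳]
  [NormedAddCommGroup 𝒰] [InnerProductSpace ℝ 𝒰] [CompleteSpace 𝒰]
  {K : 𝒳 →L[ℝ] 𝒰} {η : ℝ}

variable (K η) in
/-- The self-adjoint operator `η Id - K K*` on the dual space, positive as soon as `‖K‖² ≤ η`. -/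
def dualMetric : 𝒰 →L[ℝ] 𝒰 :=
  η • ContinuousLinearMap.id ℝ 𝒰 - K ∘L K†

variable (K η) in
/-- The squared seminorm on `𝒳 × 𝒰` given by the identity on `𝒳` and `dualMetric` on `𝒰`, in which
PD3O is an averaged iteration. It is unrelated to the norm Mathlib puts on the product. -/
def primalDualSqNorm (z : 𝒳 × 𝒰) : ℝ :=
  ‖z.1‖ ^ 2 + ⟪dualMetric K η z.2, z.2⟫

theorem dualMetric_apply (w : 𝒰) : dualMetric K η w = η • w - K ((K†) w) := rfl

theorem inner_dualMetric_comm (v w : 𝒰) : ⟪dualMetric K η v, w⟫ = ⟪dualMetric K η w, v⟫ := by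
  simp only [dualMetric_apply, inner_sub_left, real_inner_smul_left]
  rw [← ContinuousLinearMap.adjoint_inner_right K, ← ContinuousLinearMap.adjoint_inner_right K,
    real_inner_comm v, real_inner_comm ((K†) v)]

theorem inner_dualMetric_self (w : 𝒰) : ⟪dualMetric K η w, w⟫ = η * ‖w‖ ^ 2 - ‖(K†) w‖ ^ 2 := by
  rw [dualMetric_apply, inner_sub_left, real_inner_smul_left,
    ← ContinuousLinearMap.adjoint_inner_right, real_inner_self_eq_norm_sq,
    real_inner_self_eq_norm_sq]

theorem inner_dualMetric_self_nonneg (hη : ‖K‖ ^ 2 ≤ η) (w : 𝒰) :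
    0 ≤ ⟪dualMetric K η w, w⟫ := by
  rw [inner_dualMetric_self, sub_nonneg]
  exact norm_apply_sq_le_of_norm_sq_le (by rwa [LinearIsometryEquiv.norm_map]) w

theorem norm_dualMetric_sq_le (hη : ‖K‖ ^ 2 ≤ η) (w : 𝒰) :
    ‖dualMetric K η w‖ ^ 2 ≤ η * ⟪dualMetric K η w, w⟫ := by
  have hcross : ⟪w, K ((K†) w)⟫ = ‖(K†) w‖ ^ 2 := by
    rw [← ContinuousLinearMap.adjoint_inner_left, real_inner_self_eq_norm_sq]
  calc ‖dualMetric K η w‖ ^ 2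
      = η * (η * ‖w‖ ^ 2) - 2 * (η * ‖(K†) w‖ ^ 2) + ‖K ((K†) w)‖ ^ 2 := by
        rw [dualMetric_apply, norm_sub_sq_real, real_inner_smul_left, hcross, norm_smul, mul_pow,
          Real.norm_eq_abs, sq_abs]
        ring
    _ ≤ η * (η * ‖w‖ ^ 2) - 2 * (η * ‖(K†) w‖ ^ 2) + η * ‖(K†) w‖ ^ 2 := by
        gcongr
        exact norm_apply_sq_le_of_norm_sq_le hη _
    _ = η * ⟪dualMetric K η w, w⟫ := by
        rw [inner_dualMetric_self]
        ring

theorem primalDualSqNorm_nonneg (hη : ‖K‖ ^ 2 ≤ η) (z : 𝒳 × 𝒰) : 0 ≤ primalDualSqNorm K η z :=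
  add_nonneg (sq_nonneg _) (inner_dualMetric_self_nonneg hη _)

theorem norm_fst_sq_le_primalDualSqNorm (hη : ‖K‖ ^ 2 ≤ η) (z : 𝒳 × 𝒰) :
    ‖z.1‖ ^ 2 ≤ primalDualSqNorm K η z :=
  le_add_of_nonneg_right (inner_dualMetric_self_nonneg hη _)

theorem norm_fst_le_sqrt_primalDualSqNorm (hη : ‖K‖ ^ 2 ≤ η) (z : 𝒳 × 𝒰) :
    ‖z.1‖ ≤ √(primalDualSqNorm K η z) :=
  Real.le_sqrt_of_sq_le (norm_fst_sq_le_primalDualSqNorm hη z)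

theorem norm_dualMetric_snd_le (hη : ‖K‖ ^ 2 ≤ η) (z : 𝒳 × 𝒰) :
    ‖dualMetric K η z.2‖ ≤ √η * √(primalDualSqNorm K η z) := by
  have hη0 : 0 ≤ η := (sq_nonneg _).trans hη
  rw [← Real.sqrt_mul hη0]
  exact Real.le_sqrt_of_sq_le <| (norm_dualMetric_sq_le hη _).trans <|
    mul_le_mul_of_nonneg_left (le_add_of_nonneg_left (sq_nonneg _)) hη0

theorem primalDualSqNorm_eq_add_add_two_mul (z w : 𝒳 × 𝒰) :
    primalDualSqNorm K η z = primalDualSqNorm K η w + primalDualSqNorm K η (z - w)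
      + 2 * (⟪(z - w).1, w.1⟫ + ⟪dualMetric K η (z - w).2, w.2⟫) := by
  obtain ⟨d, rfl⟩ : ∃ d, z = w + d := ⟨z - w, by abel⟩
  simp only [primalDualSqNorm, add_sub_cancel_left, Prod.fst_add, Prod.snd_add, norm_add_sq_real,
    map_add, inner_add_left, inner_add_right]
  rw [inner_dualMetric_comm w.2 d.2, real_inner_comm w.1 d.1]
  ring

end PrimalDualMetric

section PD3O

open scoped InnerProduct

variable {𝒳 𝒰 : Type*}
  [NormedAddCommGroup 𝒳] [InnerProductSpace ℝ 𝒳] [CompleteSpace 𝒳]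
  [NormedAddCommGroup 𝒰] [InnerProductSpace ℝ 𝒰] [CompleteSpace 𝒰]
  {K : 𝒳 →L[ℝ] 𝒰} {F : 𝒳 → ℝ} {F' : 𝒳 → 𝒳} {R : 𝒳 → ℝ} {H : 𝒰 → ℝ} {γ η L : ℝ}

variable (K F R H) in
/-- The composite objective `Ψ = F + R + H ∘ K`. -/
def objective (x : 𝒳) : ℝ :=
  F x + R x + H (K x)

/-- One PD3O iteration with the proximal steps replaced by their subgradient inclusions. The states
`start` and `next` are the pairs `(q - K* u, u)` before and after the iteration, `x` is the primal
iterate, and `p` the output of `prox_{γηH}` in the Moreau decomposition of the dual update. -/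
structure PD3OStep (K : 𝒳 →L[ℝ] 𝒰) (F' : 𝒳 → 𝒳) (R : 𝒳 → ℝ) (H : 𝒰 → ℝ) (γ η : ℝ) where
  start : 𝒳 × 𝒰
  next : 𝒳 × 𝒰
  x : 𝒳
  p : 𝒰
  isSubgradientAt_primal : IsSubgradientAt R x (start.1 - γ⁻¹ • x)
  isSubgradientAt_dual : IsSubgradientAt H p next.2
  next_fst_eq : next.1 = γ⁻¹ • x - F' x - (K†) next.2
  p_eq : p = K x + γ • (dualMetric K η (start - next).2 - K (start - next).1)

namespace PD3OStep

/-- The squared fixed-point residual of an iteration, measured in `primalDualSqNorm`. -/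
def residual (a : PD3OStep K F' R H γ η) : ℝ :=
  primalDualSqNorm K η (a.start - a.next)

theorem residual_nonneg (hη : ‖K‖ ^ 2 ≤ η) (a : PD3OStep K F' R H γ η) : 0 ≤ a.residual :=
  primalDualSqNorm_nonneg hη _

theorem start_sub_next_fst (a : PD3OStep K F' R H γ η) :
    (a.start - a.next).1 = (a.start.1 - γ⁻¹ • a.x) + F' a.x + (K†) a.next.2 := by
  rw [Prod.fst_sub, a.next_fst_eq]
  abel

theorem start_sub_next_fst_sub (a b : PD3OStep K F' R H γ η) :
    ((a.start - b.start) - (a.next - b.next)).1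
      = ((a.start.1 - γ⁻¹ • a.x) - (b.start.1 - γ⁻¹ • b.x)) + (F' a.x - F' b.x)
        + (K†) (a.next - b.next).2 := by
  rw [sub_sub_sub_comm, Prod.fst_sub, a.start_sub_next_fst, b.start_sub_next_fst, Prod.snd_sub,
    map_sub]
  abel

theorem x_sub_eq_smul (hγ : γ ≠ 0) (a b : PD3OStep K F' R H γ η) :
    a.x - b.x = γ • ((a.next - b.next).1 + (F' a.x - F' b.x) + (K†) (a.next - b.next).2) := by
  rw [← inv_smul_eq_iff₀ hγ, Prod.fst_sub, a.next_fst_eq, b.next_fst_eq, Prod.snd_sub, map_sub,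
    smul_sub]
  abel

theorem p_sub_eq (a b : PD3OStep K F' R H γ η) :
    a.p - b.p = K (a.x - b.x) + γ • (dualMetric K η ((a.start - b.start) - (a.next - b.next)).2
      - K ((a.start - b.start) - (a.next - b.next)).1) := by
  rw [a.p_eq, b.p_eq]
  simp only [Prod.fst_sub, Prod.snd_sub, map_sub]
  module

theorem neg_norm_sq_le_inner_add_inner (hγ : 0 < γ) (hL : 0 < L)
    (hF' : IsCocoercive L F')
    (a b : PD3OStep K F' R H γ η) :
    -(γ * L / 4 * ‖((a.start - b.start) - (a.next - b.next)).1‖ ^ 2)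
      ≤ ⟪((a.start - b.start) - (a.next - b.next)).1, (a.next - b.next).1⟫
        + ⟪dualMetric K η ((a.start - b.start) - (a.next - b.next)).2, (a.next - b.next).2⟫ := by
  have hR := a.isSubgradientAt_primal.inner_sub_nonneg b.isSubgradientAt_primal
  have hH := a.isSubgradientAt_dual.inner_sub_nonneg b.isSubgradientAt_dual
  have hF := (div_le_iff₀' hL).2 (hF' a.x b.x)
  have he := a.start_sub_next_fst_sub b
  have hx := a.x_sub_eq_smul hγ.ne' b
  rw [a.p_sub_eq b, ← Prod.snd_sub] at hH
  set e := (a.start - b.start) - (a.next - b.next)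
  set d := a.next - b.next
  set g := F' a.x - F' b.x
  set ξ := a.x - b.x
  have hprimal : ‖g‖ ^ 2 / L + ⟪d.2, K ξ⟫ ≤ ⟪e.1, ξ⟫ := by
    rw [he, inner_add_left, inner_add_left, ContinuousLinearMap.adjoint_inner_left]
    linarith
  have hstate : ⟪e.1, ξ⟫ = γ * (⟪e.1, d.1⟫ + ⟪e.1, g⟫ + ⟪d.2, K e.1⟫) := by
    rw [hx, real_inner_smul_right, inner_add_right, inner_add_right,
      ContinuousLinearMap.adjoint_inner_right, real_inner_comm d.2]
  rw [inner_add_right, real_inner_smul_right, inner_sub_right,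
    real_inner_comm (dualMetric K η e.2)] at hH
  have hyoung := inner_le_norm_sq_div_add (mul_pos hγ hL) e.1 g
  have hg : ‖g‖ ^ 2 / L = γ * (‖g‖ ^ 2 / (γ * L)) := by field_simp
  refine le_of_mul_le_mul_left ?_ hγ
  linarith [mul_le_mul_of_nonneg_left hyoung hγ.le]

theorem primalDualSqNorm_next_sub_add_le (hγ : 0 < γ) (hL : 0 < L)
    (hF' : IsCocoercive L F') (hη : ‖K‖ ^ 2 ≤ η)
    (a b : PD3OStep K F' R H γ η) :
    primalDualSqNorm K η (a.next - b.next) + (1 - γ * L / 2) *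
        primalDualSqNorm K η ((a.start - b.start) - (a.next - b.next))
      ≤ primalDualSqNorm K η (a.start - b.start) := by
  have hcross := neg_norm_sq_le_inner_add_inner hγ hL hF' a b
  have hexpand := primalDualSqNorm_eq_add_add_two_mul (K := K) (η := η)
    (a.start - b.start) (a.next - b.next)
  have hγL : 0 ≤ γ * L / 2 := by positivity
  have hfst := mul_le_mul_of_nonneg_left
    (norm_fst_sq_le_primalDualSqNorm hη ((a.start - b.start) - (a.next - b.next))) hγL
  linarith

theorem norm_x_sub_le (hγ : 0 < γ) (a b : PD3OStep K F' R H γ η) :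
    ‖a.x - b.x‖ ≤ γ * ‖(a.start - b.start).1‖ := by
  have hR := a.isSubgradientAt_primal.inner_sub_nonneg b.isSubgradientAt_primal
  rw [sub_sub_sub_comm, ← smul_sub, inner_sub_left, real_inner_smul_left,
    real_inner_self_eq_norm_sq, sub_nonneg, inv_mul_le_iff₀ hγ] at hR
  rcases (norm_nonneg (a.x - b.x)).eq_or_lt with h0 | h0
  · rw [← h0]
    positivity
  · refine le_of_mul_le_mul_right ?_ h0
    calc ‖a.x - b.x‖ * ‖a.x - b.x‖ = ‖a.x - b.x‖ ^ 2 := (sq _).symm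
      _ ≤ γ * ⟪a.start.1 - b.start.1, a.x - b.x⟫ := hR
      _ ≤ γ * (‖(a.start - b.start).1‖ * ‖a.x - b.x‖) := by
        gcongr
        exact real_inner_le_norm _ _
      _ = γ * ‖(a.start - b.start).1‖ * ‖a.x - b.x‖ := (mul_assoc ..).symm

theorem norm_p_sub_le (hγ : 0 ≤ γ) (hη : ‖K‖ ^ 2 ≤ η) (a : PD3OStep K F' R H γ η) :
    ‖a.p - K a.x‖ ≤ 2 * γ * √η * √a.residual := by
  rw [a.p_eq, add_sub_cancel_left, norm_smul, Real.norm_of_nonneg hγ]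
  have hdual : ‖dualMetric K η (a.start - a.next).2‖ ≤ √η * √a.residual :=
    norm_dualMetric_snd_le hη _
  have hprimal : ‖K (a.start - a.next).1‖ ≤ √η * √a.residual :=
    K.le_of_opNorm_le_of_le (Real.le_sqrt_of_sq_le hη) (norm_fst_le_sqrt_primalDualSqNorm hη _)
  calc γ * ‖dualMetric K η (a.start - a.next).2 - K (a.start - a.next).1‖
      ≤ γ * (√η * √a.residual + √η * √a.residual) := by
        gcongr
        exact norm_sub_le_of_le hdual hprimal
    _ = 2 * γ * √η * √a.residual := by ring

theorem objective_sub_le (hF : ∀ z, IsSubgradientAt F z (F' z)) (a : PD3OStep K F' R H γ η)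
    (y : 𝒳) : objective K F R H a.x - objective K F R H y
      ≤ H (K a.x) - H a.p + ⟪a.next.2, a.p - K a.x⟫ + ⟪(a.start - a.next).1, a.x - y⟫ := by
  have hFy := hF a.x y
  have hRy := a.isSubgradientAt_primal y
  have hHy := a.isSubgradientAt_dual (K y)
  have hdual : ⟪a.next.2, K y - a.p⟫ = -⟪a.next.2, a.p - K a.x⟫ - ⟪(K†) a.next.2, a.x - y⟫ := by
    rw [ContinuousLinearMap.adjoint_inner_left, map_sub]
    simp only [inner_sub_right]
    ring
  rw [← neg_sub a.x y, inner_neg_right] at hFy hRy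
  rw [a.start_sub_next_fst, inner_add_left, inner_add_left]
  simp only [objective]
  linarith

theorem objective_le_of_next_eq_start (hF : ∀ z, IsSubgradientAt F z (F' z))
    {b : PD3OStep K F' R H γ η} (hb : b.next = b.start) (y : 𝒳) :
    objective K F R H b.x ≤ objective K F R H y := by
  have hp : b.p = K b.x := by rw [b.p_eq, hb]; simp
  have := b.objective_sub_le hF y
  rw [hp, hb] at this
  simpa using this

theorem objective_sub_le_mul_sqrt_residual (hγ : 0 ≤ γ) (hη : ‖K‖ ^ 2 ≤ η)
    (hF : ∀ z, IsSubgradientAt F z (F' z)) (a : PD3OStep K F' R H γ η) {C : NNReal} {s : Set 𝒰}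
    (hH : LipschitzOnWith C H s) (hs : s ∈ 𝓝 a.p) (hx : K a.x ∈ s) (y : 𝒳) :
    objective K F R H a.x - objective K F R H y
      ≤ (‖a.x - y‖ + 4 * C * γ * √η) * √a.residual := by
  have hHdiff : H (K a.x) - H a.p ≤ C * ‖a.p - K a.x‖ := by
    rw [← dist_eq_norm, dist_comm]
    exact (le_abs_self _).trans (hH.dist_le_mul _ hx _ (mem_of_mem_nhds hs))
  have hdual : ⟪a.next.2, a.p - K a.x⟫ ≤ C * ‖a.p - K a.x‖ :=
    (real_inner_le_norm _ _).trans <| mul_le_mul_of_nonneg_right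
      (a.isSubgradientAt_dual.norm_le_of_lipschitzOnWith hs hH) (norm_nonneg _)
  have hprimal : ⟪(a.start - a.next).1, a.x - y⟫ ≤ √a.residual * ‖a.x - y‖ :=
    (real_inner_le_norm _ _).trans <| mul_le_mul_of_nonneg_right
      (norm_fst_le_sqrt_primalDualSqNorm hη _) (norm_nonneg _)
  calc objective K F R H a.x - objective K F R H y
      ≤ C * ‖a.p - K a.x‖ + C * ‖a.p - K a.x‖ + √a.residual * ‖a.x - y‖ :=
        (a.objective_sub_le hF y).trans (by gcongr)
    _ ≤ C * (2 * γ * √η * √a.residual) + C * (2 * γ * √η * √a.residual)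
          + √a.residual * ‖a.x - y‖ := by
        gcongr <;> exact a.norm_p_sub_le hγ hη
    _ = (‖a.x - y‖ + 4 * C * γ * √η) * √a.residual := by ring

theorem primalDualSqNorm_next_sub_le (hγ : 0 < γ) (hL : 0 < L) (hγL : γ * L ≤ 2)
    (hF' : IsCocoercive L F') (hη : ‖K‖ ^ 2 ≤ η)
    (a b : PD3OStep K F' R H γ η) :
    primalDualSqNorm K η (a.next - b.next) ≤ primalDualSqNorm K η (a.start - b.start) := by
  refine le_trans (le_add_of_nonneg_right ?_) (a.primalDualSqNorm_next_sub_add_le hγ hL hF' hη b)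
  exact mul_nonneg (by linarith) (primalDualSqNorm_nonneg hη _)

theorem exists_of_isProxPt (hγ : 0 < γ) (hη : 0 < η) (hR : ConvexOn ℝ Set.univ R)
    (hH : ConvexOn ℝ Set.univ H) {q q' x : 𝒳} {u u' v p : 𝒰}
    (hx : IsProxPt γ R (γ • (q - (K†) u)) x) (hq : q' = γ⁻¹ • x - F' x)
    (hv : v = u + η⁻¹ • K (γ⁻¹ • x + q' - q)) (hp : IsProxPt (γ * η) H ((γ * η) • v) p)
    (hu : u' = v - (γ * η)⁻¹ • p) :
    ∃ a : PD3OStep K F' R H γ η,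
      a.start = (q - (K†) u, u) ∧ a.next = (q' - (K†) u', u') ∧ a.x = x := by
  refine ⟨⟨(q - (K†) u, u), (q' - (K†) u', u'), x, p, hx.isSubgradientAt hγ hR,
    hu ▸ hp.isSubgradientAt (mul_pos hγ hη) hH, by rw [hq], ?_⟩, rfl, rfl, rfl⟩
  have hp_eq : p = (γ * η) • (v - u') := by
    rw [hu, sub_sub_cancel, smul_inv_smul₀ (mul_pos hγ hη).ne']
  have hv_eq : η • v = η • u + K (γ⁻¹ • x + q' - q) := by
    rw [hv, smul_add, smul_inv_smul₀ hη.ne']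
  have hx_eq : γ • K (γ⁻¹ • x) = K x := by rw [map_smul, smul_inv_smul₀ hγ.ne']
  calc p = γ • (η • v - η • u') := by rw [hp_eq, mul_smul, smul_sub]
    _ = γ • K (γ⁻¹ • x) + γ • (η • (u - u') - K (q - q')) := by
      rw [hv_eq]
      simp only [map_sub, map_add]
      module
    _ = _ := by
      rw [hx_eq]
      simp only [Prod.fst_sub, Prod.snd_sub, dualMetric_apply, map_sub]
      module

theorem exists_of_isProxPt_of_eq_zero (hγ : 0 < γ) (hK : K = 0) (hR : ConvexOn ℝ Set.univ R)
    {q q' x : 𝒳} {u w : 𝒰} (hx : IsProxPt γ R (γ • (q - (K†) u)) x) (hq : q' = γ⁻¹ • x - F' x)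
    (hw : IsSubgradientAt H 0 w) :
    ∃ a : PD3OStep K F' R H γ η,
      a.start = (q - (K†) w, w) ∧ a.next = (q' - (K†) w, w) ∧ a.x = x := by
  subst hK
  refine ⟨⟨(q - _, w), (q' - _, w), x, 0, ?_, hw, by rw [hq], by simp⟩, rfl, rfl, rfl⟩
  simpa using hx.isSubgradientAt hγ hR

theorem exists_next_eq_start {x r : 𝒳} {u : 𝒰} (hr : IsSubgradientAt R x r)
    (hu : IsSubgradientAt H (K x) u) (hopt : F' x + r + (K†) u = 0) :
    ∃ b : PD3OStep K F' R H γ η, b.next = b.start ∧ b.x = x := by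
  have hr_eq : r = (γ⁻¹ • x - F' x - (K†) u) - γ⁻¹ • x := by
    linear_combination (norm := module) hopt
  exact ⟨⟨(γ⁻¹ • x - F' x - (K†) u, u), (γ⁻¹ • x - F' x - (K†) u, u), x, K x, hr_eq ▸ hr, hu, rfl,
    by simp⟩, rfl, rfl⟩

theorem exists_trajectory (hγ : 0 < γ) (hη : ‖K‖ ^ 2 ≤ η) (hR : ConvexOn ℝ Set.univ R)
    (hH : ConvexOn ℝ Set.univ H) {x₀ : 𝒳} {u₀ : 𝒰} (hu₀ : IsSubgradientAt H (K x₀) u₀)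
    {x q : ℕ → 𝒳} {u : ℕ → 𝒰} (hx : ∀ k, IsProxPt γ R (γ • (q k - (K†) (u k))) (x (k + 1)))
    (hq : ∀ k, q (k + 1) = γ⁻¹ • x (k + 1) - F' (x (k + 1)))
    (hu : ∀ k, ∃ p, IsProxPt (γ * η) H
        ((γ * η) • (u k + η⁻¹ • K (γ⁻¹ • x (k + 1) + q (k + 1) - q k))) p ∧
      u (k + 1) = (u k + η⁻¹ • K (γ⁻¹ • x (k + 1) + q (k + 1) - q k)) - (γ * η)⁻¹ • p) :
    ∃ T : ℕ → PD3OStep K F' R H γ η,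
      (∀ k, (T (k + 1)).start = (T k).next) ∧ ∀ k, (T k).x = x (k + 1) := by
  obtain ⟨w, hw⟩ : ∃ w : ℕ → 𝒰, ∀ k, ∃ a : PD3OStep K F' R H γ η,
      a.start = (q k - (K†) (w k), w k) ∧ a.next = (q (k + 1) - (K†) (w (k + 1)), w (k + 1)) ∧
        a.x = x (k + 1) := by
    rcases ((sq_nonneg ‖K‖).trans hη).eq_or_lt with rfl | hη0
    -- Here the dual update divides by `η = 0`, but `K = 0` and any fixed subgradient will do.
    · have hK : K = 0 := norm_eq_zero.1 (sq_nonpos_iff _ |>.1 hη)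
      exact ⟨fun _ => u₀, fun k =>
        exists_of_isProxPt_of_eq_zero hγ hK hR (hx k) (hq k) (by simpa [hK] using hu₀)⟩
    · refine ⟨u, fun k => ?_⟩
      obtain ⟨p, hp, hup⟩ := hu k
      exact exists_of_isProxPt hγ hη0 hR hH (hx k) (hq k) rfl hp hup
  choose T hstart hnext hTx using hw
  exact ⟨T, fun k => (hstart (k + 1)).trans (hnext k).symm, hTx⟩

section Trajectory

variable {T : ℕ → PD3OStep K F' R H γ η} {b : PD3OStep K F' R H γ η}

theorem antitone_residual (hγ : 0 < γ) (hL : 0 < L) (hγL : γ * L ≤ 2)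
    (hF' : IsCocoercive L F') (hη : ‖K‖ ^ 2 ≤ η)
    (hT : ∀ k, (T (k + 1)).start = (T k).next) : Antitone fun k => (T k).residual := by
  refine antitone_nat_of_succ_le fun k => ?_
  have := (T k).primalDualSqNorm_next_sub_le hγ hL hγL hF' hη (T (k + 1))
  rw [hT k] at this
  rwa [residual, residual, hT k]

theorem antitone_primalDualSqNorm_start_sub (hγ : 0 < γ) (hL : 0 < L) (hγL : γ * L ≤ 2)
    (hF' : IsCocoercive L F') (hη : ‖K‖ ^ 2 ≤ η)
    (hT : ∀ k, (T (k + 1)).start = (T k).next) (hb : b.next = b.start) :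
    Antitone fun k => primalDualSqNorm K η ((T k).start - b.start) := by
  refine antitone_nat_of_succ_le fun k => ?_
  have := (T k).primalDualSqNorm_next_sub_le hγ hL hγL hF' hη b
  rwa [hb, ← hT k] at this

theorem summable_residual (hγ : 0 < γ) (hL : 0 < L) (hγL : γ * L < 2)
    (hF' : IsCocoercive L F') (hη : ‖K‖ ^ 2 ≤ η)
    (hT : ∀ k, (T (k + 1)).start = (T k).next) (hb : b.next = b.start) :
    Summable fun k => (T k).residual := by
  refine summable_of_add_mul_le (V := fun k => primalDualSqNorm K η ((T k).start - b.start))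
    (c := 1 - γ * L / 2) (by linarith) (fun k => primalDualSqNorm_nonneg hη _)
    (fun k => (T k).residual_nonneg hη) fun k => ?_
  have := (T k).primalDualSqNorm_next_sub_add_le hγ hL hF' hη b
  rw [hb, sub_sub_sub_cancel_right] at this
  rwa [hT k, residual]

theorem tendsto_mul_residual (hγ : 0 < γ) (hL : 0 < L) (hγL : γ * L < 2)
    (hF' : IsCocoercive L F') (hη : ‖K‖ ^ 2 ≤ η)
    (hT : ∀ k, (T (k + 1)).start = (T k).next) (hb : b.next = b.start) :
    Tendsto (fun k : ℕ => (k : ℝ) * (T k).residual) atTop (𝓝 0) :=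
  tendsto_mul_of_antitone_of_summable (antitone_residual hγ hL hγL.le hF' hη hT)
    (summable_residual hγ hL hγL hF' hη hT hb)

theorem exists_objective_sub_le_mul_sqrt_residual (hγ : 0 < γ) (hL : 0 < L) (hγL : γ * L ≤ 2)
    (hF : ∀ z, IsSubgradientAt F z (F' z))
    (hF' : IsCocoercive L F') (hη : ‖K‖ ^ 2 ≤ η)
    (hH : ∀ s, Bornology.IsBounded s → ∃ C, LipschitzOnWith C H s)
    (hT : ∀ k, (T (k + 1)).start = (T k).next) (hb : b.next = b.start) :
    ∃ M, ∀ k, objective K F R H (T k).x - objective K F R H b.x ≤ M * √(T k).residual := by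
  set ρ := γ * √(primalDualSqNorm K η ((T 0).start - b.start))
  set δ := 2 * γ * √η * √(T 0).residual
  have hx (k : ℕ) : ‖(T k).x - b.x‖ ≤ ρ := by
    refine ((T k).norm_x_sub_le hγ b).trans (mul_le_mul_of_nonneg_left ?_ hγ.le)
    exact (norm_fst_le_sqrt_primalDualSqNorm hη _).trans <| Real.sqrt_le_sqrt <|
      antitone_primalDualSqNorm_start_sub hγ hL hγL hF' hη hT hb k.zero_le
  have hp (k : ℕ) : ‖(T k).p - K (T k).x‖ ≤ δ := by
    refine ((T k).norm_p_sub_le hγ.le hη).trans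
      (mul_le_mul_of_nonneg_left (Real.sqrt_le_sqrt ?_) (by positivity))
    exact antitone_residual hγ hL hγL hF' hη hT k.zero_le
  have hδ : 0 ≤ δ := by positivity
  have hKx (k : ℕ) : ‖K (T k).x - K b.x‖ ≤ √η * ρ := by
    rw [← map_sub]
    exact K.le_of_opNorm_le_of_le (Real.le_sqrt_of_sq_le hη) (hx k)
  obtain ⟨C, hC⟩ := hH (Metric.ball (K b.x) (δ + √η * ρ + 1)) Metric.isBounded_ball
  refine ⟨ρ + 4 * C * γ * √η, fun k => ?_⟩
  have hp_mem : (T k).p ∈ Metric.ball (K b.x) (δ + √η * ρ + 1) := by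
    rw [mem_ball_iff_norm]
    linarith [norm_sub_le_norm_sub_add_norm_sub (T k).p (K (T k).x) (K b.x), hp k, hKx k]
  have hKx_mem : K (T k).x ∈ Metric.ball (K b.x) (δ + √η * ρ + 1) := by
    rw [mem_ball_iff_norm]
    linarith [hKx k]
  refine ((T k).objective_sub_le_mul_sqrt_residual hγ.le hη hF hC
    (Metric.isOpen_ball.mem_nhds hp_mem) hKx_mem b.x).trans ?_
  gcongr
  exact hx k

theorem tendsto_sqrt_mul_objective_sub (hγ : 0 < γ) (hL : 0 < L) (hγL : γ * L < 2)
    (hF : ∀ z, IsSubgradientAt F z (F' z))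
    (hF' : IsCocoercive L F') (hη : ‖K‖ ^ 2 ≤ η)
    (hH : ∀ s, Bornology.IsBounded s → ∃ C, LipschitzOnWith C H s)
    (hT : ∀ k, (T (k + 1)).start = (T k).next) (hb : b.next = b.start) :
    Tendsto (fun k : ℕ => √((k + 1 : ℕ) : ℝ) *
      (objective K F R H (T k).x - objective K F R H b.x)) atTop (𝓝 0) := by
  obtain ⟨M, hM⟩ :=
    exists_objective_sub_le_mul_sqrt_residual hγ hL hγL.le hF hF' hη hH hT hb
  have hrate : Tendsto (fun k : ℕ => ((k + 1 : ℕ) : ℝ) * (T k).residual) atTop (𝓝 0) := by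
    have := (tendsto_mul_residual hγ hL hγL hF' hη hT hb).add
      (summable_residual hγ hL hγL hF' hη hT hb).tendsto_atTop_zero
    rw [add_zero] at this
    exact this.congr fun k => by push_cast; ring
  have hbound := (hrate.sqrt.const_mul M)
  rw [Real.sqrt_zero, mul_zero] at hbound
  refine squeeze_zero (fun k => ?_) (fun k => ?_) hbound
  · exact mul_nonneg (Real.sqrt_nonneg _)
      (sub_nonneg.2 (objective_le_of_next_eq_start hF hb _))
  · rw [Real.sqrt_mul (Nat.cast_nonneg _), mul_left_comm]
    exact mul_le_mul_of_nonneg_left (hM k) (Real.sqrt_nonneg _)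

end Trajectory

end PD3OStep

end PD3O

theorem pd3o_rate_little_o_inv_sqrt_general
    {𝒳 𝒰 : Type*}
    [NormedAddCommGroup 𝒳] [InnerProductSpace ℝ 𝒳] [CompleteSpace 𝒳]
    [NormedAddCommGroup 𝒰] [InnerProductSpace ℝ 𝒰] [CompleteSpace 𝒰]
    (K : 𝒳 →L[ℝ] 𝒰) (F R : 𝒳 → ℝ) (H : 𝒰 → ℝ) (F' : 𝒳 → 𝒳) (L_F : ℝ) (hLF : 0 < L_F)
    (hFconv : ConvexOn ℝ Set.univ F) (hRconv : ConvexOn ℝ Set.univ R)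
    (hHconv : ConvexOn ℝ Set.univ H)
    (hHlip : ∀ s, Bornology.IsBounded s → ∃ C, LipschitzOnWith C H s)
    (hFgrad : ∀ z, HasGradientAt F (F' z) z)
    (hFlip : ∀ z z', ‖F' z - F' z'‖ ≤ L_F * ‖z - z'‖)
    (xstar rstar : 𝒳) (hstar : 𝒰) (hrstar : IsSubgradientAt R xstar rstar)
    (hhstar : IsSubgradientAt H (K xstar) hstar)
    (hopt : F' xstar + rstar + (ContinuousLinearMap.adjoint K) hstar = 0)
    (γ η : ℝ) (hγ0 : 0 < γ) (hγ2 : γ < 2 / L_F) (hη : ‖K‖ ^ 2 ≤ η)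
    (x q : ℕ → 𝒳) (u : ℕ → 𝒰)
    (hx : ∀ k, IsProxPt γ R (γ • (q k - (ContinuousLinearMap.adjoint K) (u k))) (x (k + 1)))
    (hq : ∀ k, q (k + 1) = (1 / γ) • x (k + 1) - F' (x (k + 1)))
    (hu : ∀ k, ∃ p, IsProxPt (γ * η) H
        ((γ * η) • (u k + (1 / η) • K ((1 / γ) • x (k + 1) + q (k + 1) - q k))) p ∧
      u (k + 1) = (u k + (1 / η) • K ((1 / γ) • x (k + 1) + q (k + 1) - q k))
        - (1 / (γ * η)) • p) :
    Tendsto (fun k : ℕ => √k *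
      ((F (x k) + R (x k) + H (K (x k))) - (F xstar + R xstar + H (K xstar)))) atTop (𝓝 0) := by
  simp only [one_div] at hq hu
  obtain ⟨T, hT, hTx⟩ :=
    PD3OStep.exists_trajectory (η := η) hγ0 hη hRconv hHconv hhstar hx hq hu
  obtain ⟨b, hb, hbx⟩ :=
    PD3OStep.exists_next_eq_start (γ := γ) (η := η) hrstar hhstar hopt
  have hrate := PD3OStep.tendsto_sqrt_mul_objective_sub hγ0 hLF ((lt_div_iff₀ hLF).1 hγ2)
    (fun z => .of_hasGradientAt hFconv (hFgrad z))
    (.of_lipschitz_gradient hLF hFconv hFgrad hFlip) hη hHlip hT hb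
  simp only [hTx, hbx] at hrate
  exact (tendsto_add_atTop_iff_nat 1).1 hrate

/-- Theorem 1(i): `o(1/√k)` rate of the PD3O algorithm with constant stepsize. -/
theorem pd3o_rate_little_o_inv_sqrt
    {𝒳 𝒰 : Type*}
    [NormedAddCommGroup 𝒳] [InnerProductSpace ℝ 𝒳] [FiniteDimensional ℝ 𝒳]
    [NormedAddCommGroup 𝒰] [InnerProductSpace ℝ 𝒰] [FiniteDimensional ℝ 𝒰]
    (K : 𝒳 →L[ℝ] 𝒰)
    (F R : 𝒳 → ℝ) (H : 𝒰 → ℝ) (F' : 𝒳 → 𝒳) (L_F : ℝ)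
    (hLF : 0 < L_F)
    (hFconv : ConvexOn ℝ Set.univ F)
    (hRconv : ConvexOn ℝ Set.univ R)
    (hHconv : ConvexOn ℝ Set.univ H)
    (hFgrad : ∀ z, HasGradientAt F (F' z) z)
    (hFlip : ∀ z z', ‖F' z - F' z'‖ ≤ L_F * ‖z - z'‖)
    -- Assumption 1: existence of a primal-dual solution
    (xstar : 𝒳) (rstar : 𝒳) (hstar : 𝒰)
    (hrstar : IsSubgradientAt R xstar rstar)
    (hhstar : IsSubgradientAt H (K xstar) hstar)
    (hopt : F' xstar + rstar + (ContinuousLinearMap.adjoint K) hstar = 0)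
    -- parameters
    (γ η : ℝ) (hγ0 : 0 < γ) (hγ2 : γ < 2 / L_F) (hη : ‖K‖ ^ 2 ≤ η)
    -- PD3O iterates
    (x q : ℕ → 𝒳) (u : ℕ → 𝒰)
    (hx : ∀ k, IsProxPt γ R
      (γ • (q k - (ContinuousLinearMap.adjoint K) (u k))) (x (k+1)))
    (hq : ∀ k, q (k+1) = (1/γ) • x (k+1) - F' (x (k+1)))
    (hu : ∀ k, ∃ p, IsProxPt (γ*η) H
        ((γ*η) • (u k + (1/η) • K ((1/γ) • x (k+1) + q (k+1) - q k))) p ∧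
      u (k+1) = (u k + (1/η) • K ((1/γ) • x (k+1) + q (k+1) - q k))
        - (1/(γ*η)) • p) :
    Tendsto (fun k : ℕ => Real.sqrt k *
      ((F (x k) + R (x k) + H (K (x k))) - (F xstar + R xstar + H (K xstar))))
      atTop (𝓝 0) := by
  exact pd3o_rate_little_o_inv_sqrt_general K F R H F' L_F hLF hFconv hRconv hHconv
    (fun _ => exists_lipschitzOnWith_of_convexOn_of_isBounded hHconv) hFgrad hFlip xstar rstar
    hstar hrstar hhstar hopt γ η hγ0 hγ2 hη x q u hx hq hu
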